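/- Let F be a free group on a set with at least 3 elements, and let α ∈ F be any element. Then the one-relator quotient G = F/⟪α⟫ of F by the normal closure of α has trivial center. -/

import Mathlib

/-! The proof: Fox calculus gives matrices `N` (3 by 2) and `M` (2 by 3) over the real group ring
of `G` with `N * M = (z - 1) * I`, for `z` central.  If `z ≠ 1`, this is impossible by a
(von Neumann) trace argument on the Hilbert space `ℓ²(Fin 2 × G)`.
-/

namespace OneRel

open MonoidAlgebra

noncomputable section

/-- Permuting the index set gives an isometry of `ℓ²`. -/
lemma exists_shift {ι : Type*} (b : HilbertBasis ι ℝ (lp (fun _ : ι => ℝ) 2)) (e : ι ≃ ι) :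
    ∃ R : (lp (fun _ : ι => ℝ) 2) ≃ₗᵢ[ℝ] (lp (fun _ : ι => ℝ) 2), ∀ i, R (b i) = b (e i) := by
  classical
  have ho : Orthonormal ℝ (fun i => b (e i)) := b.orthonormal.comp e e.injective
  have hs : ⊤ ≤ (Submodule.span ℝ (Set.range (fun i => b (e i)))).topologicalClosure := by
    have : Set.range (fun i => b (e i)) = Set.range b := e.surjective.range_comp b
    rw [this, b.dense_span]
  let b1 := HilbertBasis.mk ho hs
  refine ⟨b.repr.trans b1.repr.symm, fun i => ?_⟩
  rw [LinearIsometryEquiv.trans_apply, b.repr_self, b1.repr_symm_single]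
  simp [b1]

variable {G : Type*} [Group G]

/-- coefficient of the identity -/
def tau : MonoidAlgebra ℝ G →ₗ[ℝ] ℝ :=
  Finsupp.lapply 1 ∘ₗ (coeffLinearEquiv ℝ).toLinearMap

/-- The involution of the group ring. -/
def inv : MonoidAlgebra ℝ G →ₗ[ℝ] MonoidAlgebra ℝ G := mapDomainLinearMap ℝ ℝ (fun g => g⁻¹)

@[simp] lemma inv_single (g : G) (r : ℝ) : inv (single g r) = single g⁻¹ r := by simp [inv]

open Classical in
lemma tau_single (g : G) (r : ℝ) : tau (single g r) = if g = 1 then r else 0 := by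
  simp [tau, coeffLinearEquiv, Finsupp.single_apply]

lemma inv_inv (a : MonoidAlgebra ℝ G) : inv (inv a) = a := by
  induction a using MonoidAlgebra.induction_linear with
  | zero => simp
  | add x y hx hy => simp [hx, hy]
  | single g r => simp

lemma inv_mul (a b : MonoidAlgebra ℝ G) : inv (a * b) = inv b * inv a := by
  induction a using MonoidAlgebra.induction_linear with
  | zero => simp
  | add x y hx hy => simp [hx, hy, add_mul, mul_add]
  | single g r =>
    induction b using MonoidAlgebra.induction_linear with
    | zero => simp
    | add x y hx hy => simp [hx, hy, add_mul, mul_add]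
    | single h s => simp [mul_comm]

lemma tau_mul_comm (a b : MonoidAlgebra ℝ G) : tau (a * b) = tau (b * a) := by
  induction a using MonoidAlgebra.induction_linear with
  | zero => simp
  | add x y hx hy => simp [hx, hy, add_mul, mul_add]
  | single g r =>
    induction b using MonoidAlgebra.induction_linear with
    | zero => simp
    | add x y hx hy => simp [hx, hy, add_mul, mul_add]
    | single h s =>
      have h1 : g * h = 1 ↔ h * g = 1 := mul_eq_one_comm
      rw [single_mul_single, single_mul_single, tau_single, tau_single, mul_comm r s]
      by_cases h2 : h * g = 1
      · rw [if_pos h2, if_pos (h1.mpr h2)]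
      · rw [if_neg h2, if_neg (fun h3 => h2 (h1.mp h3))]

lemma tau_inv (a : MonoidAlgebra ℝ G) : tau (inv a) = tau a := by
  induction a using MonoidAlgebra.induction_linear with
  | zero => simp
  | add x y hx hy => simp [hx, hy]
  | single g r =>
    rw [inv_single, tau_single, tau_single]
    by_cases h : g = 1
    · simp [h]
    · rw [if_neg h, if_neg (fun h2 => h (inv_eq_one.mp h2))]

lemma central_comm {z : G} (hz : ∀ g, z * g = g * z) (a : MonoidAlgebra ℝ G) :
    single z 1 * a = a * single z 1 := by
  induction a using MonoidAlgebra.induction_linear with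
  | zero => simp
  | add x y hx hy => simp [hx, hy, add_mul, mul_add]
  | single g r => simp [hz]

/-- inner product on columns -/
def ip (x y : Fin 2 → MonoidAlgebra ℝ G) : ℝ := ∑ k, tau (inv (x k) * y k)

/-- Existence of the compression form to the closure of the column space of `M`. -/
lemma exists_form (M : Fin 2 → Fin 3 → MonoidAlgebra ℝ G) :
    ∃ B : (Fin 2 → MonoidAlgebra ℝ G) →ₗ[ℝ] (Fin 2 → MonoidAlgebra ℝ G) →ₗ[ℝ] ℝ,
      (∀ x y, B x y = B y x) ∧ (∀ x, B x x ≤ ip x x) ∧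
      (∀ x y (h : G), B (fun k => x k * single h 1) (fun k => y k * single h 1) = B x y) ∧
      (∀ x y, (∃ a : Fin 3 → MonoidAlgebra ℝ G, x = fun k => ∑ j, M k j * a j) → B x y = ip x y) ∧
      (∀ x y, (∀ j a, ip x (fun k => M k j * a) = 0) → B x y = 0) := by
  classical
  let b : HilbertBasis (Fin 2 × G) ℝ (lp (fun _ : Fin 2 × G => ℝ) 2) := default
  let jk : Fin 2 → MonoidAlgebra ℝ G →ₗ[ℝ] (lp (fun _ : Fin 2 × G => ℝ) 2) := fun k =>
    Finsupp.linearCombination ℝ (fun g => b (k, g)) ∘ₗ (coeffLinearEquiv ℝ).toLinearMap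
  have jk_single : ∀ k g r, jk k (single g r) = r • b (k, g) := by
    intro k g r
    simp [jk, coeffLinearEquiv]
  let J : (Fin 2 → MonoidAlgebra ℝ G) →ₗ[ℝ] (lp (fun _ : Fin 2 × G => ℝ) 2) :=
    ∑ k, jk k ∘ₗ LinearMap.proj k
  have J_apply : ∀ x, J x = ∑ k, jk k (x k) := by
    intro x; simp [J]
  have inner_jk : ∀ k l a c, inner ℝ (jk k a) (jk l c) = if k = l then tau (inv a * c) else 0 := by
    intro k l a c
    induction a using MonoidAlgebra.induction_linear with
    | zero => simp
    | add x y hx hy =>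
      rw [map_add, inner_add_left, hx, hy, map_add, add_mul, map_add]; split_ifs <;> simp
    | single g r =>
      induction c using MonoidAlgebra.induction_linear with
      | zero => simp
      | add x y hx hy =>
        rw [map_add, inner_add_right, hx, hy, mul_add, map_add]; split_ifs <;> simp
      | single h s =>
        rw [jk_single, jk_single, inner_smul_left, inner_smul_right,
          orthonormal_iff_ite.mp b.orthonormal]
        by_cases hkl : k = l
        · simp [hkl, tau_single, inv_mul_eq_one]
        · simp [hkl]
  have inner_J : ∀ x y, inner ℝ (J x) (J y) = ip x y := by
    intro x y
    rw [J_apply, J_apply, sum_inner]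
    simp only [inner_sum, inner_jk]
    simp [ip]
  -- right translations
  have hR : ∀ h : G, ∃ R : (lp (fun _ : Fin 2 × G => ℝ) 2) ≃ₗᵢ[ℝ] (lp (fun _ : Fin 2 × G => ℝ) 2),
      ∀ x, R (J x) = J (fun k => x k * single h 1) := by
    intro h
    obtain ⟨R, hR⟩ := exists_shift b ((Equiv.refl (Fin 2)).prodCongr (Equiv.mulRight h))
    refine ⟨R, fun x => ?_⟩
    rw [J_apply, J_apply, map_sum]
    refine Finset.sum_congr rfl fun k _ => ?_
    induction x k using MonoidAlgebra.induction_linear with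
    | zero => simp
    | add x y hx hy => simp only [map_add, add_mul, hx, hy]
    | single g r =>
      rw [single_mul_single, jk_single, jk_single, map_smul, hR]
      simp
  let U₀ : Submodule ℝ (lp (fun _ : Fin 2 × G => ℝ) 2) :=
    Submodule.span ℝ (Set.range fun p : Fin 3 × MonoidAlgebra ℝ G => J (fun k => M k p.1 * p.2))
  let U := U₀.topologicalClosure
  have hUc : IsClosed (U : Set (lp (fun _ : Fin 2 × G => ℝ) 2)) :=
    U₀.isClosed_topologicalClosure
  have : CompleteSpace U := hUc.completeSpace_coe
  have memU : ∀ j a, J (fun k => M k j * a) ∈ U := fun j a =>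
    U₀.le_topologicalClosure (Submodule.subset_span ⟨(j, a), rfl⟩)
  -- orthogonality to `U` can be checked on generators
  have perp : ∀ v, (∀ j a, inner ℝ v (J (fun k => M k j * a)) = 0) → ∀ u ∈ U, inner ℝ v u = 0 := by
    intro v hv u hu
    have h1 : U₀ ≤ (innerSL ℝ v).ker := by
      refine Submodule.span_le.mpr ?_
      rintro _ ⟨⟨j, a⟩, rfl⟩
      simpa using hv j a
    have h2 : U ≤ (innerSL ℝ v).ker :=
      Submodule.topologicalClosure_minimal _ h1 (ContinuousLinearMap.isClosed_ker _)
    simpa using h2 hu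
  have RU : ∀ (h : G) (R : (lp (fun _ : Fin 2 × G => ℝ) 2) ≃ₗᵢ[ℝ]
      (lp (fun _ : Fin 2 × G => ℝ) 2)),
      (∀ x, R (J x) = J (fun k => x k * single h 1)) → ∀ u ∈ U, R u ∈ U := by
    intro h R hR u hu
    have h1 : U₀ ≤ U.comap (R.toContinuousLinearEquiv : _ →L[ℝ] _).toLinearMap := by
      refine Submodule.span_le.mpr ?_
      rintro _ ⟨⟨j, a⟩, rfl⟩
      have : R (J (fun k => M k j * a)) ∈ U := by
        rw [hR]
        simpa only [mul_assoc] using memU j (a * single h 1)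
      simpa using this
    have h2 : U ≤ U.comap (R.toContinuousLinearEquiv : _ →L[ℝ] _).toLinearMap :=
      Submodule.topologicalClosure_minimal _ h1 (hUc.preimage R.continuous)
    simpa using h2 hu
  let P := U.starProjection
  have Psymm : ∀ u v, inner ℝ (P u) v = inner ℝ u (P v) := fun u v =>
    Submodule.inner_starProjection_left_eq_right U u v
  have Pidem : ∀ u, P (P u) = P u := fun u =>
    Submodule.starProjection_eq_self_iff.mpr (Submodule.starProjection_apply_mem U u)
  refine ⟨LinearMap.mk₂ ℝ (fun x y => inner ℝ (P (J x)) (J y)) ?_ ?_ ?_ ?_, ?_, ?_, ?_, ?_, ?_⟩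
  · intro x y w; simp [inner_add_left]
  · intro c x y; simp [inner_smul_left]
  · intro x y w; simp [inner_add_right]
  · intro c x y; simp [inner_smul_right]
  · intro x y
    simp only [LinearMap.mk₂_apply]
    rw [Psymm, real_inner_comm]
  · intro x
    simp only [LinearMap.mk₂_apply]
    rw [← inner_J, ← Pidem, Psymm, real_inner_self_eq_norm_sq, real_inner_self_eq_norm_sq]
    exact pow_le_pow_left₀ (norm_nonneg _) (U.norm_starProjection_apply_le (J x)) 2
  · intro x y h
    simp only [LinearMap.mk₂_apply]
    obtain ⟨R, hRx⟩ := hR h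
    obtain ⟨R', hRx'⟩ := hR h⁻¹
    have key : P (R (J x)) = R (P (J x)) := by
      refine Submodule.eq_starProjection_of_mem_of_inner_eq_zero
        (RU h R hRx _ (Submodule.starProjection_apply_mem U _)) (perp _ ?_)
      intro j a
      have : J (fun k => M k j * a) = R (J (fun k => M k j * (a * single h⁻¹ 1))) := by
        rw [hRx]
        simp [mul_assoc, ← one_def]
      rw [this, ← map_sub, R.inner_map_map]
      exact Submodule.starProjection_inner_eq_zero _ _ (memU _ _)
    rw [← hRx, ← hRx, key, R.inner_map_map]
  · rintro x y ⟨a, rfl⟩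
    simp only [LinearMap.mk₂_apply]
    have : J (fun k => ∑ j, M k j * a j) ∈ U := by
      have h1 : (fun k => ∑ j, M k j * a j) = ∑ j, (fun k => M k j * a j) := by
        ext1 k; simp
      rw [h1, map_sum]
      exact Submodule.sum_mem _ fun j _ => memU j _
    have h2 : P (J (fun k => ∑ j, M k j * a j)) = J (fun k => ∑ j, M k j * a j) :=
      Submodule.starProjection_eq_self_iff.mpr this
    rw [h2, inner_J]
  · intro x y hx
    simp only [LinearMap.mk₂_apply]
    rw [Psymm]
    exact perp _ (fun j a => by rw [inner_J]; exact hx j a) _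
      (Submodule.starProjection_apply_mem U _)

/-- The rank obstruction. -/
lemma no_factor (z : G) (hz : ∀ g, z * g = g * z) (hz1 : z ≠ 1)
    (M : Fin 2 → Fin 3 → MonoidAlgebra ℝ G) (N : Fin 3 → Fin 2 → MonoidAlgebra ℝ G)
    (hNM : ∀ i j, ∑ k, N i k * M k j = if i = j then (single z 1 - 1 : MonoidAlgebra ℝ G) else 0) :
    False := by
  classical
  obtain ⟨B, Bsymm, Ble, Binv, BU, Bperp⟩ := exists_form M
  set w : MonoidAlgebra ℝ G := single z 1 - 1 with hw
  set w' : MonoidAlgebra ℝ G := single z⁻¹ 1 - 1 with hw'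
  have hzi : ∀ g, z⁻¹ * g = g * z⁻¹ := fun g => by
    rw [inv_mul_eq_iff_eq_mul, ← mul_assoc, hz, mul_assoc, mul_inv_cancel, mul_one]
  have wc : ∀ a, w * a = a * w := fun a => by
    rw [hw, sub_mul, mul_sub, central_comm hz]; simp
  have wc' : ∀ a, w' * a = a * w' := fun a => by
    rw [hw', sub_mul, mul_sub, central_comm hzi]; simp
  have ww : w' * w = single 1 2 - single z 1 - single z⁻¹ 1 := by
    have h2 : (single 1 2 : MonoidAlgebra ℝ G) = single 1 1 + single 1 1 := by
      rw [← single_add]; norm_num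
    rw [hw, hw', h2, one_def]
    simp [sub_mul, mul_sub]
    abel
  let β : Fin 2 → Fin 2 → MonoidAlgebra ℝ G → ℝ := fun i k a => B (Pi.single i a) (Pi.single k 1)
  have βsymm : ∀ i k a, β k i (inv a) = β i k a := by
    intro i k a
    induction a using MonoidAlgebra.induction_linear with
    | zero => simp [β]
    | add x y hx hy =>
      simp only [β, map_add, Pi.single_add, LinearMap.add_apply] at hx hy ⊢
      rw [hx, hy]
    | single g r =>
      have h1 : ∀ (l : Fin 2) (h : G) (r : ℝ), (Pi.single l (single h r) :
          Fin 2 → MonoidAlgebra ℝ G) = r • Pi.single l (single h 1) := by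
        intro l h r; rw [← Pi.single_smul]; simp
      have h2 : ∀ (l : Fin 2) (a : MonoidAlgebra ℝ G) (h : G),
          (fun m => (Pi.single l a : Fin 2 → MonoidAlgebra ℝ G) m * single h 1)
            = Pi.single l (a * single h 1) := by
        intro l a h
        ext1 m
        by_cases hm : m = l
        · subst hm; simp
        · simp [hm]
      simp only [β, inv_single]
      rw [h1 k, h1 i]
      simp only [map_smul, LinearMap.smul_apply]
      congr 1
      rw [← Binv _ _ g, h2, h2, Bsymm]
      simp [← one_def]
  let C : Fin 2 → Fin 2 → MonoidAlgebra ℝ G := fun i k => w' * ∑ j, M i j * N j k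
  have CM : ∀ i j, ∑ k, C i k * M k j = w' * w * M i j := by
    intro i j
    simp only [C, mul_assoc, ← Finset.mul_sum, Finset.sum_mul]
    rw [Finset.sum_comm]
    simp only [← Finset.mul_sum, hNM]
    simp [wc]
  have decomp : ∀ x : Fin 2 → MonoidAlgebra ℝ G, x = ∑ k, Pi.single k (x k) := fun x => by
    rw [Finset.univ_sum_single]
  -- step 2
  have s2 : ∀ i, ∑ k, β i k (C i k) = β i i (w' * w) := by
    intro i
    have h0 := Bperp ((fun k => inv (C i k)) - Pi.single i (inv (w' * w))) (Pi.single i 1) (by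
      intro j a
      have : ∀ k, (if k = i then w' * w * (M k j * a) else 0) =
          inv ((Pi.single i (inv (w' * w)) : Fin 2 → MonoidAlgebra ℝ G) k) * (M k j * a) := by
        intro k
        by_cases hk : k = i
        · subst hk; simp [inv_inv]
        · simp [hk]
      simp only [ip, Pi.sub_apply, map_sub, sub_mul, Finset.sum_sub_distrib, ← this, inv_inv]
      rw [← map_sum, ← map_sum]
      simp only [← mul_assoc, ← Finset.sum_mul, CM]
      simp)
    rw [map_sub, LinearMap.sub_apply, sub_eq_zero, decomp (fun k => inv (C i k)), map_sum,
      LinearMap.sum_apply] at h0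
    have h3 : β i i (inv (w' * w)) = β i i (w' * w) := βsymm i i _
    rw [← h3]
    refine Eq.trans (Finset.sum_congr rfl fun k _ => ?_) h0
    exact (βsymm i k _).symm
  have s3 : ∀ i, ∑ k, β k i (C k i) = tau (C i i) := by
    intro i
    have h0 := BU (fun k => C k i) (Pi.single i 1) ⟨fun j => w' * N j i, by
      ext1 k
      simp only [C, Finset.mul_sum, ← mul_assoc, wc' (M k _)]⟩
    rw [decomp (fun k => C k i), map_sum, LinearMap.sum_apply, ← decomp] at h0
    refine h0.trans ?_
    rw [ip, Finset.sum_eq_single i]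
    · simp [tau_inv]
    · intro k _ hk; simp [hk]
    · simp
  have tauww : tau (w' * w) = 2 := by
    rw [ww, map_sub, map_sub, tau_single, tau_single, tau_single]
    simp [hz1]
  have s5 : ∑ i, tau (C i i) = 6 := by
    have h1 : ∀ i j, tau (w' * (M i j * N j i)) = tau (w' * (N j i * M i j)) := by
      intro i j
      rw [← mul_assoc, tau_mul_comm, ← mul_assoc, ← wc', mul_assoc]
    simp only [C, Finset.mul_sum, map_sum, h1]
    rw [Finset.sum_comm]
    have h2 : ∀ j, ∑ i, tau (w' * (N j i * M i j)) = 2 := fun j => by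
      rw [← map_sum, ← Finset.mul_sum, hNM, if_pos rfl, tauww]
    simp only [h2]
    norm_num
  have s4 : ∀ i, β i i (w' * w) ≤ 2 := by
    intro i
    have h1 := Ble (Pi.single i w)
    have h2 : ip (Pi.single i w) (Pi.single i w) = 2 := by
      rw [ip, Finset.sum_eq_single i]
      · rw [← tauww]; simp [hw, hw', one_def]
      · intro k _ hk; simp [hk]
      · simp
    have h3 : B (Pi.single i w) (Pi.single i w) = β i i (w' * w) := by
      have e1 : β i i (single z⁻¹ 1) = β i i (single z 1) := by
        rw [← βsymm i i (single z 1), inv_single]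
      have e2 : B (Pi.single i (single z 1)) (Pi.single i (single z 1)) = β i i 1 := by
        simp only [β]
        rw [← Binv (Pi.single i 1) _ z]
        congr 2 <;> (ext1 m; by_cases hm : m = i <;> [(subst hm; simp); simp [hm]])
      have e4 : (single 1 2 : MonoidAlgebra ℝ G) = 1 + 1 := by
        rw [one_def, ← single_add]; norm_num
      rw [ww, hw, e4]
      simp only [β, Pi.single_sub, Pi.single_add, map_sub, map_add, LinearMap.sub_apply,
        LinearMap.add_apply] at e1 e2 ⊢
      rw [e1, e2, Bsymm (Pi.single i 1) (Pi.single i (single z 1))]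
      ring
    linarith
  have h6 : ∑ i, β i i (w' * w) = 6 := by
    rw [← s5]
    simp only [← s2, ← s3]
    exact Finset.sum_comm
  have h4 : ∑ i : Fin 2, β i i (w' * w) ≤ ∑ i : Fin 2, 2 := Finset.sum_le_sum fun i _ => s4 i
  rw [h6] at h4
  norm_num at h4

/-- Existence of Fox derivatives. -/
lemma exists_fox {X : Type*} (π : FreeGroup X →* G) (d : X → MonoidAlgebra ℝ G) :
    ∃ D : FreeGroup X → MonoidAlgebra ℝ G, (∀ u v, D (u * v) = D u + single (π u) 1 * D v) ∧
      ∀ x, D (FreeGroup.of x) = d x := by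
  let s : X → Equiv.Perm (MonoidAlgebra ℝ G) := fun x =>
    { toFun := fun v => single (π (FreeGroup.of x)) 1 * v + d x
      invFun := fun v => single (π (FreeGroup.of x))⁻¹ 1 * (v - d x)
      left_inv := fun v => by simp [← mul_assoc, ← one_def]
      right_inv := fun v => by simp [← mul_assoc, ← one_def] }
  let Φ := FreeGroup.lift s
  have aff : ∀ u v, Φ u v = single (π u) 1 * v + Φ u 0 := by
    intro u
    induction u using FreeGroup.induction_on with
    | C1 => intro v; simp [← one_def]
    | of x => intro v; simp [Φ, s]
    | inv_of x hx =>
      intro v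
      simp [Φ, s, sub_eq_add_neg, Equiv.Perm.inv_def, mul_add]
    | mul a b ha hb =>
      intro v
      rw [map_mul, Equiv.Perm.mul_apply, Equiv.Perm.mul_apply, ha, hb, ha (Φ b 0), map_mul, mul_add]
      simp only [← mul_assoc, single_mul_single, mul_one, add_assoc]
  refine ⟨fun u => Φ u 0, fun u v => ?_, fun x => ?_⟩
  · simp only [map_mul, Equiv.Perm.mul_apply]
    rw [aff u (Φ v 0), add_comm]
  · simp [Φ, s]

end

end OneRel

/-- If `F` is a free group on a set with at least 3 elements and
`α ∈ F`, then the one-relator quotient `F/⟪α⟫` has trivial center. -/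
theorem freeGroup_oneRelator_center_trivial {X : Type*} (hX : 3 ≤ Cardinal.mk X)
    (α : FreeGroup X) :
    Subgroup.center (FreeGroup X ⧸ Subgroup.normalClosure ({α} : Set (FreeGroup X))) = ⊥ := by
  classical
  rw [eq_bot_iff]
  intro z hzc
  rw [Subgroup.mem_bot]
  by_contra hz1
  have hz : ∀ g, z * g = g * z := fun g => (Subgroup.mem_center_iff.mp hzc g).symm
  obtain ⟨f⟩ : Nonempty (Fin 3 ↪ X) := by
    have h : Cardinal.lift.{_} (Cardinal.mk (Fin 3)) ≤ Cardinal.lift.{0} (Cardinal.mk X) := by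
      simpa using hX
    exact Cardinal.lift_mk_le'.mp h
  let R := Subgroup.normalClosure ({α} : Set (FreeGroup X))
  let π : FreeGroup X →* FreeGroup X ⧸ R := QuotientGroup.mk' R
  obtain ⟨t, rfl⟩ : ∃ t, π t = z := QuotientGroup.mk'_surjective R z
  have hD : ∀ j : Fin 3, ∃ D : FreeGroup X → MonoidAlgebra ℝ (FreeGroup X ⧸ R),
      (∀ u v, D (u * v) = D u + MonoidAlgebra.single (π u) 1 * D v) ∧
      ∀ x, D (FreeGroup.of x) = if x = f j then 1 else 0 := fun j =>
    OneRel.exists_fox π (fun x => if x = f j then 1 else 0)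
  choose D hmul hof using hD
  have hone : ∀ j, D j 1 = 0 := fun j => by
    have h := hmul j 1 1
    rw [mul_one, map_one, ← MonoidAlgebra.one_def, one_mul] at h
    simpa using h
  have hrel : ∀ u ∈ R, ∃ q, ∀ j, D j u = q * D j α := by
    let S : Subgroup (FreeGroup X) :=
      { carrier := {u | π u = 1 ∧ ∃ q, ∀ j, D j u = q * D j α}
        one_mem' := ⟨map_one _, 0, fun j => by simp [hone]⟩
        mul_mem' := by
          rintro u v ⟨hu, q, hq⟩ ⟨hv, p, hp⟩
          refine ⟨by simp [hu, hv], q + p, fun j => ?_⟩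
          rw [hmul, hu, ← MonoidAlgebra.one_def, one_mul, hq, hp, add_mul]
        inv_mem' := by
          rintro u ⟨hu, q, hq⟩
          refine ⟨by simp [hu], -q, fun j => ?_⟩
          have h := hmul j u u⁻¹
          rw [mul_inv_cancel, hone, hu, ← MonoidAlgebra.one_def, one_mul, hq] at h
          rw [neg_mul]
          exact (neg_eq_of_add_eq_zero_right h.symm).symm }
    have : S.Normal := ⟨by
      rintro u ⟨hu, q, hq⟩ g
      refine ⟨by simp [hu], MonoidAlgebra.single (π g) 1 * q, fun j => ?_⟩
      have h := hmul j g g⁻¹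
      rw [mul_inv_cancel, hone] at h
      rw [hmul, hmul, map_mul, hu, mul_one, hq, mul_assoc, add_right_comm, ← h, zero_add]⟩
    have hle : R ≤ S := Subgroup.normalClosure_le_normal (by
      rw [Set.singleton_subset_iff]
      refine ⟨?_, 1, fun j => by simp⟩
      exact (QuotientGroup.eq_one_iff α).mpr (Subgroup.subset_normalClosure rfl))
    exact fun u hu => (hle hu).2
  have hq : ∀ i : Fin 3, ∃ q, ∀ j, D j (t * FreeGroup.of (f i) * t⁻¹ * (FreeGroup.of (f i))⁻¹)
      = q * D j α := fun i => by
    apply hrel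
    rw [← QuotientGroup.eq_one_iff]
    change π _ = 1
    rw [map_mul, map_mul, map_mul, hz, map_inv, map_inv]
    group
  choose q hq using hq
  refine OneRel.no_factor (π t) hz hz1 (fun k j => if k = 0 then D j α else D j t)
    (fun i k => if k = 0 then q i else MonoidAlgebra.single (π (FreeGroup.of (f i))) 1 - 1) ?_
  intro i j
  have h1 := hmul j t (FreeGroup.of (f i))
  have h2 : t * FreeGroup.of (f i) = (t * FreeGroup.of (f i) * t⁻¹ * (FreeGroup.of (f i))⁻¹) *
    (FreeGroup.of (f i) * t) := by group
  have hπ : π (t * FreeGroup.of (f i) * t⁻¹ * (FreeGroup.of (f i))⁻¹) = 1 := by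
    rw [map_mul, map_mul, map_mul, hz, map_inv, map_inv]
    group
  rw [h2, hmul j _ (FreeGroup.of (f i) * t), hπ, hmul j _ t, hq, hof, ← MonoidAlgebra.one_def, one_mul] at h1
  have h3 : (if f i = f j then (1 : MonoidAlgebra ℝ (FreeGroup X ⧸ R)) else 0) =
      if i = j then 1 else 0 := by simp
  rw [h3] at h1
  rw [Fin.sum_univ_two]
  simp only [if_true, one_ne_zero, if_false, Fin.isValue]
  by_cases hij : i = j
  · simp only [hij, if_true, mul_one] at h1 ⊢
    rw [sub_mul, one_mul]
    rw [eq_sub_iff_add_eq, ← sub_eq_zero]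
    rw [← sub_eq_zero] at h1
    rw [← h1]
    abel
  · simp only [hij, if_false, mul_zero, add_zero, zero_add] at h1 ⊢
    rw [sub_mul, one_mul, ← add_sub_assoc, h1, sub_self]
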